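/- Let K, B, d be positive integers with B dividing K, and for k ∈ {1,…,K} let [k] := B·⌊(k−1)/B⌋ + 1. Let H > 0 and λ ≥ 1 be reals, and let φ^(1),…,φ^(K) and ψ^(1),…,ψ^(K) be vectors in ℝ^d satisfying ‖φ^(k)‖₂² ≤ H, ‖ψ^(k)‖_∞ ≤ 2, and |⟨ψ^(k), φ^(k)⟩| ≤ 1 for all k. Then ∑_{k=1}^K |⟨ψ^(k), φ^(k)⟩| ≤ (B·d / (2·log 2))·log(1 + K·H/λ) + 2·√(2·d·log(1 + K·H/λ)) · √( 4·K·λ + ∑_{k=1}^K ∑_{t<[k]} ⟨φ^(t), ψ^(k)⟩² ). -/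

import Mathlib

open scoped BigOperators RealInnerProductSpace

noncomputable section

/-- Batch start of episode `k` under fixed batch size `B`:
`[k] := B * ⌊(k-1)/B⌋ + 1`. -/
def batchStart (B k : ℕ) : ℕ := B * ((k - 1) / B) + 1

open Matrix in
theorem aux_one_add_trace {m : ℕ} (M : Matrix (Fin m) (Fin m) ℝ) (hM : M.PosSemidef) :
    1 + M.trace ≤ (1 + M).det := by
  have hH := hM.isHermitian
  have h1 : (1 + M).det = ∏ i, (1 + hH.eigenvalues i) := by
    have hs := hH.spectral_theorem
    have hu := hH.det_eq_prod_eigenvalues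
    have e := congrArg (fun p : Polynomial ℝ => p.eval (-1)) hH.charpoly_eq
    simp only [Matrix.eval_charpoly, Polynomial.eval_prod] at e
    have e2 : (scalar (Fin m) (-1 : ℝ)) - M = -(1 + M) := by
      ext i j
      simp [Matrix.one_apply, Matrix.diagonal_apply]
      split_ifs <;> ring
    rw [e2, Matrix.det_neg] at e
    have e3 : ∏ i, Polynomial.eval (-1) (Polynomial.X - Polynomial.C ((hH.eigenvalues i : ℝ)))
        = (-1) ^ (Fintype.card (Fin m)) * ∏ i, (1 + hH.eigenvalues i) := by
      rw [← Finset.card_univ, ← Finset.prod_const, ← Finset.prod_mul_distrib]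
      refine Finset.prod_congr rfl fun i _ => ?_
      simp
      ring
    simp only [RCLike.ofReal_real_eq_id, id] at e
    rw [e3] at e
    exact mul_left_cancel₀ (pow_ne_zero _ (by norm_num)) e
  have h2 : M.trace = ∑ i, hH.eigenvalues i := by
    simpa using hH.trace_eq_sum_eigenvalues
  rw [h1, h2]
  have h3 : ∀ s : Finset (Fin m),
      1 + ∑ i ∈ s, hH.eigenvalues i ≤ ∏ i ∈ s, (1 + hH.eigenvalues i) := by
    intro s
    induction s using Finset.induction_on with
    | empty => simp
    | insert a s ha ih =>
      rw [Finset.sum_insert ha, Finset.prod_insert ha]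
      have h4 : 0 ≤ hH.eigenvalues a := hM.eigenvalues_nonneg a
      have h5 : 0 ≤ ∑ i ∈ s, hH.eigenvalues i :=
        Finset.sum_nonneg fun i _ => hM.eigenvalues_nonneg i
      have h6 := mul_le_mul_of_nonneg_left ih (show 0 ≤ 1 + hH.eigenvalues a by linarith)
      have h7 := mul_nonneg h4 h5
      linarith
  exact h3 Finset.univ

open Matrix in
theorem aux_logdet {d : ℕ} (M : Matrix (Fin d) (Fin d) ℝ) (hM : M.PosDef) (c : ℝ) (hc : 0 < c)
    (ht : M.trace ≤ d * c) : Real.log M.det ≤ d * Real.log c := by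
  have hH := hM.isHermitian
  have h2 : M.trace = ∑ i, hH.eigenvalues i := by
    simpa using hH.trace_eq_sum_eigenvalues
  have h1 : M.det = ∏ i, hH.eigenvalues i := by
    simpa using hH.det_eq_prod_eigenvalues
  have hp := hM.eigenvalues_pos
  rw [h1, Real.log_prod (fun i _ => (hp i).ne')]
  have h3 : ∀ i, Real.log (hH.eigenvalues i) ≤ Real.log c + (hH.eigenvalues i / c - 1) := by
    intro i
    have := Real.log_le_sub_one_of_pos (div_pos (hp i) hc)
    rw [Real.log_div (hp i).ne' hc.ne'] at this
    linarith
  calc _ ≤ ∑ i, (Real.log c + (hH.eigenvalues i / c - 1)) := Finset.sum_le_sum fun i _ => h3 i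
    _ = d * Real.log c + (M.trace / c - d) := by
      rw [Finset.sum_add_distrib, Finset.sum_sub_distrib, ← Finset.sum_div, h2]; simp
    _ ≤ _ := by
      have : M.trace / c ≤ d := by rw [div_le_iff₀ hc]; exact ht
      linarith

open Matrix in
theorem aux_cs {d : ℕ} (V : Matrix (Fin d) (Fin d) ℝ) (hV : V.PosDef) (x y : Fin d → ℝ) :
    (x ⬝ᵥ y) ^ 2 ≤ (x ⬝ᵥ V *ᵥ x) * (y ⬝ᵥ V⁻¹ *ᵥ y) := by
  have hdet : IsUnit V.det := (Matrix.isUnit_iff_isUnit_det V).1 hV.isUnit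
  set z := V⁻¹ *ᵥ y with hz
  have hVz : V *ᵥ z = y := by
    rw [hz, Matrix.mulVec_mulVec, Matrix.mul_nonsing_inv _ hdet, Matrix.one_mulVec]
  have hT : Vᵀ = V := by simpa using hV.isHermitian.eq
  have hzx : z ⬝ᵥ V *ᵥ x = x ⬝ᵥ y := by
    rw [Matrix.dotProduct_mulVec, ← Matrix.mulVec_transpose, hT, hVz, dotProduct_comm]
  have key : ∀ t : ℝ, 0 ≤ (y ⬝ᵥ z) * (t * t) + (2 * (x ⬝ᵥ y)) * t + x ⬝ᵥ V *ᵥ x := by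
    intro t
    have h := hV.posSemidef.dotProduct_mulVec_nonneg (x + t • z)
    simp only [star_trivial, Matrix.mulVec_add, Matrix.mulVec_smul, hVz, add_dotProduct,
      dotProduct_add, smul_dotProduct, dotProduct_smul, smul_eq_mul, hzx] at h
    rw [dotProduct_comm z y] at h
    linarith
  have := discrim_le_zero key
  unfold discrim at this
  nlinarith

open Matrix in
theorem aux_det_add {d m : ℕ} (V : Matrix (Fin d) (Fin d) ℝ) (hV : V.PosDef)
    (A : Matrix (Fin d) (Fin m) ℝ) :
    V.det * (1 + ∑ j, (A.col j) ⬝ᵥ V⁻¹ *ᵥ (A.col j)) ≤ (V + A * Aᵀ).det := by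
  have hdet : IsUnit V.det := (Matrix.isUnit_iff_isUnit_det V).1 hV.isUnit
  have h1 : V + A * Aᵀ = V * (1 + (V⁻¹ * A) * Aᵀ) := by
    rw [Matrix.mul_add, Matrix.mul_one, Matrix.mul_assoc, Matrix.mul_nonsing_inv_cancel_left _ _ hdet]
  rw [h1, Matrix.det_mul, Matrix.det_one_add_mul_comm]
  have hP : (Aᵀ * (V⁻¹ * A)).PosSemidef := by
    have := hV.inv.posSemidef.conjTranspose_mul_mul_same A
    simpa [Matrix.mul_assoc] using this
  have := aux_one_add_trace _ hP
  refine mul_le_mul_of_nonneg_left (le_trans (le_of_eq ?_) this) hV.det_pos.le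
  congr 1

theorem aux_sum_batch (B n : ℕ) (f : ℕ → ℝ) :
    ∑ k ∈ Finset.Icc 1 (B * n), f k
      = ∑ b ∈ Finset.range n, ∑ j ∈ Finset.range B, f (B * b + j + 1) := by
  have h : ∀ N, ∑ k ∈ Finset.Icc 1 N, f k = ∑ k ∈ Finset.range N, f (k + 1) := by
    intro N
    induction N with
    | zero => simp
    | succ N ih => rw [Finset.sum_Icc_succ_top (by omega), ih, Finset.sum_range_succ]
  rw [h]
  induction n with
  | zero => simp
  | succ n ih => rw [Nat.mul_succ, Finset.sum_range_add, ih, Finset.sum_range_succ]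

open Matrix in
/-- Regularized covariance matrix of the first `N` vectors. -/
def auxV {d : ℕ} (l : ℝ) (v : ℕ → Fin d → ℝ) (N : ℕ) : Matrix (Fin d) (Fin d) ℝ :=
  l • 1 + ∑ t ∈ Finset.Icc 1 N, vecMulVec (v t) (v t)

open Matrix in
theorem auxV_posDef {d : ℕ} (l : ℝ) (hl : 0 < l) (v : ℕ → Fin d → ℝ) (N : ℕ) :
    (auxV l v N).PosDef := by
  refine Matrix.PosDef.add_posSemidef (Matrix.PosDef.one.smul hl) ?_
  refine Matrix.posSemidef_sum _ fun t _ => ?_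
  simpa using Matrix.posSemidef_vecMulVec_self_star (v t)

open Matrix in
theorem auxV_quad {d : ℕ} (l : ℝ) (v : ℕ → Fin d → ℝ) (N : ℕ) (x : Fin d → ℝ) :
    x ⬝ᵥ auxV l v N *ᵥ x = l * (x ⬝ᵥ x) + ∑ t ∈ Finset.Icc 1 N, (v t ⬝ᵥ x) ^ 2 := by
  rw [auxV, Matrix.add_mulVec, dotProduct_add, Matrix.sum_mulVec, dotProduct_sum]
  congr 1
  · simp [Matrix.smul_mulVec]
  · refine Finset.sum_congr rfl fun t _ => ?_
    rw [Matrix.vecMulVec_mulVec]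
    simp [dotProduct_comm x, sq]

open Matrix in
theorem auxV_trace {d : ℕ} (l : ℝ) (v : ℕ → Fin d → ℝ) (N : ℕ) :
    (auxV l v N).trace = d * l + ∑ t ∈ Finset.Icc 1 N, (v t ⬝ᵥ v t) := by
  simp [auxV, Matrix.trace_add, Matrix.trace_sum, Matrix.trace_vecMulVec, mul_comm]

open Matrix in
theorem auxV_succ {d : ℕ} (l : ℝ) (v : ℕ → Fin d → ℝ) (B b : ℕ) :
    auxV l v (B * (b + 1)) = auxV l v (B * b) +
      (Matrix.of fun i (j : Fin B) => v (B * b + j + 1) i) *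
      (Matrix.of fun i (j : Fin B) => v (B * b + j + 1) i)ᵀ := by
  ext i k
  simp only [auxV, Matrix.add_apply, Matrix.sum_apply, Matrix.mul_apply, aux_sum_batch,
    Finset.sum_range_succ _ b, Matrix.transpose_apply, Matrix.of_apply, Matrix.vecMulVec_apply]
  rw [Fin.sum_univ_eq_sum_range (fun j => v (B * b + j + 1) i * v (B * b + j + 1) k) B, add_assoc]

open Matrix in
theorem aux_main (B n d : ℕ) (hB : 0 < B) (hd : 0 < d) (l L P c : ℝ) (hl : 0 < l) (hc : 0 < c)
    (v w : ℕ → Fin d → ℝ)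
    (hpair : ∀ k ∈ Finset.Icc 1 (B * n), |w k ⬝ᵥ v k| ≤ 1)
    (htr : (auxV l v (B * n)).trace ≤ d * (l * c)) (hL : L = Real.log c)
    (hP : ∑ b ∈ Finset.range n, ∑ j ∈ Finset.range B,
      (w (B * b + j + 1) ⬝ᵥ auxV l v (B * b) *ᵥ w (B * b + j + 1)) ≤ P) :
    ∑ k ∈ Finset.Icc 1 (B * n), |w k ⬝ᵥ v k| ≤
      (B * d / (2 * Real.log 2)) * L + 2 * Real.sqrt (2 * d * L) * Real.sqrt P := by
  have hpd := auxV_posDef l hl v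
  set r : ℕ → ℝ := fun b => Real.log (auxV l v (B * (b + 1))).det
    - Real.log (auxV l v (B * b)).det with hr
  set q : ℕ → ℕ → ℝ := fun b j =>
    v (B * b + j + 1) ⬝ᵥ (auxV l v (B * b))⁻¹ *ᵥ v (B * b + j + 1) with hq
  set p : ℕ → ℕ → ℝ := fun b j =>
    w (B * b + j + 1) ⬝ᵥ auxV l v (B * b) *ᵥ w (B * b + j + 1) with hp
  have hlog2 : 0 < Real.log 2 := Real.log_pos (by norm_num)
  have hq0 : ∀ b j, 0 ≤ q b j := fun b j => by
    simpa using (hpd (B * b)).inv.posSemidef.dotProduct_mulVec_nonneg (v (B * b + j + 1))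
  have hp0 : ∀ b j, 0 ≤ p b j := fun b j => by
    simpa using (hpd (B * b)).posSemidef.dotProduct_mulVec_nonneg (w (B * b + j + 1))
  have hrx : ∀ b, Real.log (1 + ∑ j ∈ Finset.range B, q b j) ≤ r b := by
    intro b
    have h := aux_det_add (auxV l v (B * b)) (hpd _)
      (Matrix.of fun i (j : Fin B) => v (B * b + j + 1) i)
    rw [← auxV_succ] at h
    have e : ∑ j : Fin B, ((Matrix.of fun i (j : Fin B) => v (B * b + j + 1) i).col j) ⬝ᵥ
        (auxV l v (B * b))⁻¹ *ᵥ ((Matrix.of fun i (j : Fin B) => v (B * b + j + 1) i).col j)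
        = ∑ j ∈ Finset.range B, q b j := by
      rw [← Fin.sum_univ_eq_sum_range]
      rfl
    rw [e] at h
    have hx : 0 ≤ ∑ j ∈ Finset.range B, q b j := Finset.sum_nonneg fun j _ => hq0 b j
    have hD := (hpd (B * b)).det_pos
    have := Real.log_le_log (by positivity) h
    rw [Real.log_mul hD.ne' (by positivity)] at this
    simp only [hr]
    linarith
  have hr0 : ∀ b, 0 ≤ r b := fun b => le_trans (Real.log_nonneg (by
    have : 0 ≤ ∑ j ∈ Finset.range B, q b j := Finset.sum_nonneg fun j _ => hq0 b j
    linarith)) (hrx b)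
  have hsum : ∑ b ∈ Finset.range n, r b ≤ d * L := by
    have ht : ∑ b ∈ Finset.range n, r b = Real.log (auxV l v (B * n)).det
        - Real.log (auxV l v (B * 0)).det :=
      Finset.sum_range_sub (fun b => Real.log (auxV l v (B * b)).det) n
    have h0 : Real.log (auxV l v (B * 0)).det = d * Real.log l := by
      simp [auxV, Matrix.det_smul, Real.log_pow]
    have h1 := aux_logdet _ (hpd (B * n)) (l * c) (by positivity) htr
    rw [Real.log_mul hl.ne' hc.ne'] at h1
    rw [ht, h0, hL]
    linarith
  set g : ℕ → ℕ → ℝ := fun b j => if r b < 2 * Real.log 2 then q b j else 0 with hg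
  have hg0 : ∀ b j, 0 ≤ g b j := fun b j => by
    simp only [hg]; split_ifs
    · exact hq0 b j
    · exact le_rfl
  have hgs : ∀ b, ∑ j ∈ Finset.range B, g b j ≤ 8 * r b := by
    intro b
    by_cases h : r b < 2 * Real.log 2
    · simp only [hg, h, if_true]
      have hx : 0 ≤ ∑ j ∈ Finset.range B, q b j := Finset.sum_nonneg fun j _ => hq0 b j
      have h1 := hrx b
      set x := ∑ j ∈ Finset.range B, q b j
      have h4 : Real.log (1 + x) < Real.log 4 := by
        have : Real.log 4 = 2 * Real.log 2 := by
          rw [show (4 : ℝ) = 2 ^ 2 by norm_num, Real.log_pow]; norm_num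
        linarith
      have hx4 : 1 + x < 4 := (Real.log_lt_log_iff (by positivity) (by norm_num)).1 h4
      have h5 := Real.one_sub_inv_le_log_of_pos (show 0 < 1 + x by positivity)
      have h6 : x / 4 ≤ 1 - (1 + x)⁻¹ := by
        have : 1 - (1 + x)⁻¹ = x / (1 + x) := by field_simp; ring
        rw [this]
        exact div_le_div_of_nonneg_left hx (by positivity) hx4.le
      linarith
    · simp only [hg, h, if_false, Finset.sum_const_zero]
      have := hr0 b
      linarith
  have hterm : ∀ b ∈ Finset.range n, ∀ j ∈ Finset.range B,
      |w (B * b + j + 1) ⬝ᵥ v (B * b + j + 1)| ≤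
        r b / (2 * Real.log 2) + Real.sqrt (p b j) * Real.sqrt (g b j) := by
    intro b hb j hj
    rw [Finset.mem_range] at hb hj
    by_cases h : r b < 2 * Real.log 2
    · simp only [hg, h, if_true]
      have h1 : 0 ≤ r b / (2 * Real.log 2) := div_nonneg (hr0 b) (by positivity)
      have h2 := Real.abs_le_sqrt (aux_cs _ (hpd (B * b)) (w (B * b + j + 1)) (v (B * b + j + 1)))
      have h3 : Real.sqrt (p b j * q b j) = Real.sqrt (p b j) * Real.sqrt (q b j) :=
        Real.sqrt_mul (hp0 b j) _
      simp only [hp, hq] at h3 ⊢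
      linarith
    · have h1 : 1 ≤ r b / (2 * Real.log 2) := by
        rw [le_div_iff₀ (by positivity)]; linarith
      have h2 := hpair (B * b + j + 1) (by
        rw [Finset.mem_Icc]
        have : B * (b + 1) ≤ B * n := Nat.mul_le_mul_left _ hb
        rw [Nat.mul_succ] at this
        omega)
      have : 0 ≤ Real.sqrt (p b j) * Real.sqrt (g b j) := by positivity
      linarith
  rw [aux_sum_batch]
  calc _ ≤ ∑ b ∈ Finset.range n, ∑ j ∈ Finset.range B,
        (r b / (2 * Real.log 2) + Real.sqrt (p b j) * Real.sqrt (g b j)) :=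
        Finset.sum_le_sum fun b hb => Finset.sum_le_sum fun j hj => hterm b hb j hj
    _ = B / (2 * Real.log 2) * (∑ b ∈ Finset.range n, r b) +
        ∑ x ∈ Finset.range n ×ˢ Finset.range B,
          Real.sqrt (p x.1 x.2) * Real.sqrt (g x.1 x.2) := by
      simp only [Finset.sum_add_distrib]
      rw [Finset.sum_product, Finset.mul_sum]
      congr 1
      refine Finset.sum_congr rfl fun b _ => ?_
      simp
      ring
    _ ≤ B / (2 * Real.log 2) * (d * L) +
        Real.sqrt (∑ x ∈ Finset.range n ×ˢ Finset.range B, p x.1 x.2) *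
        Real.sqrt (∑ x ∈ Finset.range n ×ˢ Finset.range B, g x.1 x.2) := by
      gcongr
      exact Real.sum_sqrt_mul_sqrt_le _ (fun x => hp0 x.1 x.2) (fun x => hg0 x.1 x.2)
    _ ≤ B / (2 * Real.log 2) * (d * L) + Real.sqrt P * Real.sqrt (2 ^ 2 * (2 * d * L)) := by
      gcongr
      · rw [Finset.sum_product]; exact hP
      · rw [Finset.sum_product]
        calc _ ≤ ∑ b ∈ Finset.range n, 8 * r b := Finset.sum_le_sum fun b _ => hgs b
          _ = 8 * ∑ b ∈ Finset.range n, r b := by rw [Finset.mul_sum]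
          _ ≤ _ := by linarith
    _ = _ := by
      rw [Real.sqrt_mul (by norm_num), Real.sqrt_sq (by norm_num)]
      ring

/-- Core vector inequality from the proof of Lemma D.1 of the paper. -/
theorem batched_vector_inequality
    (K B d : ℕ) (hK : 0 < K) (hB : 0 < B) (hd : 0 < d) (hBK : B ∣ K)
    (H lam : ℝ) (hH : 0 < H) (hlam : 1 ≤ lam)
    (φ ψ : ℕ → EuclideanSpace ℝ (Fin d))
    (hφ : ∀ k ∈ Finset.Icc 1 K, ‖φ k‖ ^ 2 ≤ H)
    (hψ : ∀ k ∈ Finset.Icc 1 K, ∀ i, |ψ k i| ≤ 2)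
    (hpair : ∀ k ∈ Finset.Icc 1 K, |⟪ψ k, φ k⟫| ≤ 1) :
    ∑ k ∈ Finset.Icc 1 K, |⟪ψ k, φ k⟫| ≤
      (B * d / (2 * Real.log 2)) * Real.log (1 + K * H / lam) +
        2 * Real.sqrt (2 * d * Real.log (1 + K * H / lam)) *
          Real.sqrt (4 * K * lam +
            ∑ k ∈ Finset.Icc 1 K, ∑ t ∈ Finset.Ico 1 (batchStart B k),
              ⟪φ t, ψ k⟫ ^ 2) := by
  obtain ⟨n, rfl⟩ := hBK
  have hd' : (0 : ℝ) < d := by exact_mod_cast hd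
  have hl0 : 0 < lam := by linarith
  have hin : ∀ x y : EuclideanSpace ℝ (Fin d), ⟪x, y⟫ = x.ofLp ⬝ᵥ y.ofLp := by
    intro x y
    rw [EuclideanSpace.inner_eq_star_dotProduct, star_trivial, dotProduct_comm]
  have hmem : ∀ b ∈ Finset.range n, ∀ j ∈ Finset.range B,
      B * b + j + 1 ∈ Finset.Icc 1 (B * n) := by
    intro b hb j hj
    rw [Finset.mem_range] at hb hj
    rw [Finset.mem_Icc]
    have : B * (b + 1) ≤ B * n := Nat.mul_le_mul_left _ hb
    rw [Nat.mul_succ] at this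
    omega
  simp only [hin] at hpair ⊢
  refine aux_main B n d hB hd (lam / d) _ _ (1 + (B * n : ℕ) * H / lam) (by positivity)
    (by positivity) (fun k => (φ k).ofLp) (fun k => (ψ k).ofLp) hpair ?_ rfl ?_
  · rw [auxV_trace]
    have : ∑ t ∈ Finset.Icc 1 (B * n), ((φ t).ofLp ⬝ᵥ (φ t).ofLp) ≤ (B * n : ℕ) * H := by
      calc _ ≤ ∑ t ∈ Finset.Icc 1 (B * n), H := Finset.sum_le_sum fun t ht => by
            rw [← hin, real_inner_self_eq_norm_sq]; exact hφ t ht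
        _ = _ := by simp
    have e : (d : ℝ) * (lam / d * (1 + (B * n : ℕ) * H / lam)) = d * (lam / d) + (B * n : ℕ) * H := by
      field_simp
    rw [e]
    linarith
  · rw [aux_sum_batch]
    have e : (4 : ℝ) * (B * n : ℕ) * lam
        = ∑ b ∈ Finset.range n, ∑ j ∈ Finset.range B, 4 * lam := by
      simp; ring
    rw [e, ← Finset.sum_add_distrib]
    refine Finset.sum_le_sum fun b hb => ?_
    rw [← Finset.sum_add_distrib]
    refine Finset.sum_le_sum fun j hj => ?_
    rw [auxV_quad]
    have hbs : batchStart B (B * b + j + 1) = B * b + 1 := by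
      rw [Finset.mem_range] at hj
      rw [batchStart, Nat.add_sub_cancel, Nat.mul_add_div hB, Nat.div_eq_of_lt hj, add_zero]
    have hI : Finset.Ico 1 (B * b + 1) = Finset.Icc 1 (B * b) := by
      ext x; simp only [Finset.mem_Ico, Finset.mem_Icc]; omega
    rw [hbs, hI]
    refine add_le_add ?_ le_rfl
    have h4 : (ψ (B * b + j + 1)).ofLp ⬝ᵥ (ψ (B * b + j + 1)).ofLp ≤ d * 4 := by
      calc _ ≤ ∑ i : Fin d, (4 : ℝ) := Finset.sum_le_sum fun i _ => by
            have := abs_le.1 (hψ _ (hmem b hb j hj) i)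
            nlinarith
        _ = _ := by simp
    calc _ ≤ lam / d * (d * 4) := by gcongr
      _ = _ := by field_simp
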